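/- Classical squashed entanglement admits the ensemble formula implying the upper bound: for any mixed ensemble {(p_k, ρ^k_{AB})} of ρ_{AB}, (I_b)_n(ρ_{AB}) ≤ n·∑_k p_k I(ρ^k_{AB}) + S({p_k}); hence I_b^{(∞)}(ρ_{AB}) ≤ 2E^C_{sq}(ρ_{AB}) where 2E^C_{sq}(ρ) = min over ensembles of ∑_k p_k I(ρ^k). -/

import Mathlib

open scoped BigOperators Kronecker ComplexOrder
open Matrix Filter Topology

noncomputable section

/-- Shannon entropy (log base 2) of a finitely supported distribution. -/
def shannon {I : Type} [Fintype I] (p : I → ℝ) : ℝ := -∑ i, p i * Real.logb 2 (p i)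

/-- `p` is a probability distribution. -/
def IsProbDist {I : Type} [Fintype I] (p : I → ℝ) : Prop :=
  (∀ i, 0 ≤ p i) ∧ ∑ i, p i = 1

/-- First marginal of a joint distribution. -/
def margA {I J : Type} [Fintype J] (p : I × J → ℝ) : I → ℝ := fun i => ∑ j, p (i, j)

/-- Second marginal of a joint distribution. -/
def margB {I J : Type} [Fintype I] (p : I × J → ℝ) : J → ℝ := fun j => ∑ i, p (i, j)

/-- Classical mutual information of a joint distribution. -/
def classMI {I J : Type} [Fintype I] [Fintype J] (p : I × J → ℝ) : ℝ :=
  shannon (margA p) + shannon (margB p) - shannon p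

/-- Kullback-Leibler divergence (log base 2). -/
def klDiv {I : Type} [Fintype I] (p q : I → ℝ) : ℝ := ∑ i, p i * Real.logb 2 (p i / q i)

/-- A density operator: positive semidefinite with unit trace. -/
def IsDensity {n : Type} [Fintype n] (ρ : Matrix n n ℂ) : Prop :=
  ρ.PosSemidef ∧ ρ.trace = 1

/-- Von Neumann entropy (log base 2) via the eigenvalues of a Hermitian matrix. -/
def vnEntropy {n : Type} [Fintype n] [DecidableEq n] (ρ : Matrix n n ℂ) : ℝ :=
  if h : ρ.IsHermitian then -∑ i, h.eigenvalues i * Real.logb 2 (h.eigenvalues i) else 0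

/-- Partial trace over the second tensor factor. -/
def ptraceB {A B : Type} [Fintype B] (ρ : Matrix (A × B) (A × B) ℂ) : Matrix A A ℂ :=
  Matrix.of fun a a' => ∑ b, ρ (a, b) (a', b)

/-- Partial trace over the first tensor factor. -/
def ptraceA {A B : Type} [Fintype A] (ρ : Matrix (A × B) (A × B) ℂ) : Matrix B B ℂ :=
  Matrix.of fun b b' => ∑ a, ρ (a, b) (a, b')

/-- Quantum mutual information I(A:B) = S(ρ_A) + S(ρ_B) - S(ρ_{AB}). -/
def mutInfo {A B : Type} [Fintype A] [Fintype B] [DecidableEq A] [DecidableEq B]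
    (ρ : Matrix (A × B) (A × B) ℂ) : ℝ :=
  vnEntropy (ptraceB ρ) + vnEntropy (ptraceA ρ) - vnEntropy ρ

/-- Tensor product of two bipartite states, with the cut (A₁A₂ : B₁B₂). -/
def tens2 {A₁ B₁ A₂ B₂ : Type}
    (ρ : Matrix (A₁ × B₁) (A₁ × B₁) ℂ) (σ : Matrix (A₂ × B₂) (A₂ × B₂) ℂ) :
    Matrix ((A₁ × A₂) × (B₁ × B₂)) ((A₁ × A₂) × (B₁ × B₂)) ℂ :=
  Matrix.of fun x y => ρ (x.1.1, x.2.1) (y.1.1, y.2.1) * σ (x.1.2, x.2.2) (y.1.2, y.2.2)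

/-- n-fold tensor power of a bipartite state, with the A^n : B^n cut. -/
def tpow {A B : Type} (σ : Matrix (A × B) (A × B) ℂ) (n : ℕ) :
    Matrix ((Fin n → A) × (Fin n → B)) ((Fin n → A) × (Fin n → B)) ℂ :=
  Matrix.of fun x y => ∏ i, σ (x.1 i, x.2 i) (y.1 i, y.2 i)

/-- Reduced state of the k-th copy (partial trace over all other copies). -/
def copyMarginal {A B : Type} [Fintype A] [Fintype B] [DecidableEq A] [DecidableEq B] {n : ℕ}
    (ρ : Matrix ((Fin n → A) × (Fin n → B)) ((Fin n → A) × (Fin n → B)) ℂ) (k : Fin n) :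
    Matrix (A × B) (A × B) ℂ :=
  Matrix.of fun x y => ∑ f : Fin n → A, ∑ g : Fin n → B,
    if f k = x.1 ∧ g k = x.2 then
      ρ (f, g) (Function.update f k y.1, Function.update g k y.2) else 0

/-- `τ` is an n-copy broadcast state of `ρ`. -/
def IsBroadcast {A B : Type} [Fintype A] [Fintype B] [DecidableEq A] [DecidableEq B] (n : ℕ)
    (τ : Matrix ((Fin n → A) × (Fin n → B)) ((Fin n → A) × (Fin n → B)) ℂ)
    (ρ : Matrix (A × B) (A × B) ℂ) : Prop :=
  IsDensity τ ∧ ∀ k : Fin n, copyMarginal τ k = ρ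

/-- n-copy broadcast mutual information (I_b)_n. -/
def Ib {A B : Type} [Fintype A] [Fintype B] [DecidableEq A] [DecidableEq B] (n : ℕ)
    (ρ : Matrix (A × B) (A × B) ℂ) : ℝ :=
  sInf {x | ∃ τ, IsBroadcast n τ ρ ∧ x = mutInfo τ}

/-- Partial trace of a state on (A A' : B B') over the primed (ancilla) systems. -/
def ptracePrime {A B A' B' : Type} [Fintype A'] [Fintype B']
    (τ : Matrix ((A × A') × (B × B')) ((A × A') × (B × B')) ℂ) :
    Matrix (A × B) (A × B) ℂ :=
  Matrix.of fun x y => ∑ a', ∑ b', τ ((x.1, a'), (x.2, b')) ((y.1, a'), (y.2, b'))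

/-- Partial trace of a state on (A A' : B B') over the unprimed systems. -/
def ptraceMain {A B A' B' : Type} [Fintype A] [Fintype B]
    (τ : Matrix ((A × A') × (B × B')) ((A × A') × (B × B')) ℂ) :
    Matrix (A' × B') (A' × B') ℂ :=
  Matrix.of fun x y => ∑ a, ∑ b, τ ((a, x.1), (b, x.2)) ((a, y.1), (b, y.2))

/-- Conditional entanglement of mutual information (CEMI). -/
def EI {A B : Type} [Fintype A] [Fintype B] [DecidableEq A] [DecidableEq B]
    (ρ : Matrix (A × B) (A × B) ℂ) : ℝ :=
  (1 / 2) * sInf {x | ∃ (dA dB : ℕ)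
    (τ : Matrix ((A × Fin dA) × (B × Fin dB)) ((A × Fin dA) × (B × Fin dB)) ℂ),
    IsDensity τ ∧ ptracePrime τ = ρ ∧ x = mutInfo τ - mutInfo (ptraceMain τ)}

/-- Classical squashed entanglement, via the ensemble formula. -/
def EsqC {A B : Type} [Fintype A] [Fintype B] [DecidableEq A] [DecidableEq B]
    (ρ : Matrix (A × B) (A × B) ℂ) : ℝ :=
  (1 / 2) * sInf {x | ∃ (m : ℕ) (p : Fin m → ℝ) (σ : Fin m → Matrix (A × B) (A × B) ℂ),
    (∀ k, 0 ≤ p k) ∧ (∑ k, p k = 1) ∧ (∀ k, IsDensity (σ k)) ∧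
    (∑ k, (p k : ℂ) • σ k = ρ) ∧ x = ∑ k, p k * mutInfo (σ k)}

/-- Separability of a bipartite state. -/
def Separable {A B : Type} [Fintype A] [Fintype B]
    (ρ : Matrix (A × B) (A × B) ℂ) : Prop :=
  ∃ (m : ℕ) (p : Fin m → ℝ) (σA : Fin m → Matrix A A ℂ) (σB : Fin m → Matrix B B ℂ),
    (∀ k, 0 ≤ p k) ∧ (∑ k, p k = 1) ∧ (∀ k, IsDensity (σA k) ∧ IsDensity (σB k)) ∧
    ρ = ∑ k, (p k : ℂ) • (σA k ⊗ₖ σB k)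

/-- A finite POVM. -/
def IsPOVM {A ι : Type} [Fintype A] [Fintype ι] [DecidableEq A]
    (M : ι → Matrix A A ℂ) : Prop :=
  (∀ i, (M i).PosSemidef) ∧ ∑ i, M i = 1

/-- Outcome distribution of a local product measurement. -/
def measProb {A B ι κ : Type} [Fintype A] [Fintype B]
    (M : ι → Matrix A A ℂ) (N : κ → Matrix B B ℂ)
    (ρ : Matrix (A × B) (A × B) ℂ) : ι × κ → ℝ :=
  fun x => (((M x.1 ⊗ₖ N x.2) * ρ).trace).re

/-- Completeness condition for a family of Kraus operators. -/
def IsKraus {A A' ι : Type} [Fintype A] [Fintype A'] [Fintype ι] [DecidableEq A]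
    (K : ι → Matrix A' A ℂ) : Prop :=
  ∑ i, (K i)ᴴ * K i = 1

/-- Action of the product channel Λ_A ⊗ Λ_B (given by Kraus operators) on a bipartite state. -/
def localApply {A B A' B' ι κ : Type} [Fintype A] [Fintype B] [Fintype ι] [Fintype κ]
    (K : ι → Matrix A' A ℂ) (L : κ → Matrix B' B ℂ)
    (ρ : Matrix (A × B) (A × B) ℂ) : Matrix (A' × B') (A' × B') ℂ :=
  ∑ i, ∑ j, (K i ⊗ₖ L j) * ρ * (K i ⊗ₖ L j)ᴴ

/-- Measured relative entropy distance to separable states (with optimization over local POVMs). -/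
def measREE {A B : Type} [Fintype A] [Fintype B] [DecidableEq A] [DecidableEq B]
    (ρ : Matrix (A × B) (A × B) ℂ) : ℝ :=
  sInf {x | ∃ σ : Matrix (A × B) (A × B) ℂ, IsDensity σ ∧ Separable σ ∧
    x = sSup {y | ∃ (m m' : ℕ) (M : Fin m → Matrix A A ℂ) (N : Fin m' → Matrix B B ℂ),
      IsPOVM M ∧ IsPOVM N ∧ y = klDiv (measProb M N ρ) (measProb M N σ)}}

/-!
The mixture `∑ pₖ σₖ^{⊗n}` of tensor powers of the members of an ensemble for `ρ` is an `n`-copy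
broadcast state of `ρ`. Mutual information is additive on each power, and mixing raises it by at
most the Shannon entropy of the weights, because `I = S_A + S_B - S_{AB}`: mixing raises `S_A` by at
most `S({pₖ})`, while the conditional entropy `S_{AB} - S_B` is concave. Dividing by `n` and letting
`n → ∞` removes the Shannon term.

Both entropy inequalities come from the relative entropy, written, up to the factor `log 2`, as
`D(ρ‖σ) = ∫₀^∞ (⟨ρ, (L_σ + t R_ρ)⁻¹ ρ⟩ - tr ρ / (1 + t)) dt` with `L_σ`, `R_ρ` the left and right
multiplications. The first term of the integrand is a supremum of functionals linear in `(ρ, σ)`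
(Kosaki), so `D` is jointly convex, and it is decreasing in `σ`.
-/

open MeasureTheory

section ScalarIntegral

variable {r s : ℝ}

lemma hasDerivAt_mul_log_add_mul_sub_log_one_add (hr : 0 < r) (hs : 0 < s) {t : ℝ} (ht : 0 ≤ t) :
    HasDerivAt (fun t => r * (Real.log (s + t * r) - Real.log (1 + t)))
      (r ^ 2 / (s + t * r) - r / (1 + t)) t := by
  have hlin : HasDerivAt (fun t : ℝ => s + t * r) r t := by
    simpa using ((hasDerivAt_id t).mul_const r).const_add s
  have hone : HasDerivAt (fun t : ℝ => 1 + t) 1 t := (hasDerivAt_id t).const_add 1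
  refine (((hlin.log (by positivity)).sub (hone.log (by positivity))).const_mul r).congr_deriv ?_
  ring

lemma tendsto_mul_log_add_mul_sub_log_one_add (hr : 0 < r) (hs : 0 < s) :
    Tendsto (fun t => r * (Real.log (s + t * r) - Real.log (1 + t))) atTop
      (𝓝 (r * Real.log r)) := by
  have hratio : Tendsto (fun t : ℝ => r + (s - r) * (1 + t)⁻¹) atTop (𝓝 (r + (s - r) * 0)) :=
    ((tendsto_inv_atTop_zero.comp
      (tendsto_atTop_add_const_left _ _ tendsto_id)).const_mul _).const_add _
  rw [mul_zero, add_zero] at hratio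
  refine ((hratio.log hr.ne').const_mul r).congr' ?_
  filter_upwards [eventually_ge_atTop 0] with t ht
  rw [← Real.log_div (by positivity) (by positivity)]
  congr 2
  field_simp
  ring

lemma sq_div_add_mul_sub_div_one_add (hr : 0 ≤ r) (hs : 0 < s) {t : ℝ} (ht : 0 ≤ t) :
    r ^ 2 / (s + t * r) - r / (1 + t) = r * (r - s) / ((s + t * r) * (1 + t)) := by
  field_simp
  ring

lemma integrableOn_sq_div_add_mul_sub_div (hr : 0 ≤ r) (hs : 0 < s) :
    IntegrableOn (fun t => r ^ 2 / (s + t * r) - r / (1 + t)) (Set.Ioi 0) := by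
  rcases hr.eq_or_lt with rfl | hr
  · simp
  have hderiv := fun t ht => hasDerivAt_mul_log_add_mul_sub_log_one_add hr hs (t := t) ht
  have hlim := tendsto_mul_log_add_mul_sub_log_one_add hr hs
  rcases le_total s r with hsr | hsr
  · refine integrableOn_Ioi_deriv_of_nonneg' hderiv (fun t ht => ?_) hlim
    have ht : 0 < t := ht
    rw [sq_div_add_mul_sub_div_one_add hr.le hs ht.le]
    have := sub_nonneg.2 hsr
    positivity
  · refine integrableOn_Ioi_deriv_of_nonpos' hderiv (fun t ht => ?_) hlim
    have ht : 0 < t := ht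
    rw [sq_div_add_mul_sub_div_one_add hr.le hs ht.le]
    exact div_nonpos_of_nonpos_of_nonneg
      (mul_nonpos_of_nonneg_of_nonpos hr.le (sub_nonpos.2 hsr)) (by positivity)

lemma integral_sq_div_add_mul_sub_div (hr : 0 ≤ r) (hs : 0 < s) :
    ∫ t in Set.Ioi (0 : ℝ), (r ^ 2 / (s + t * r) - r / (1 + t))
      = r * (Real.log r - Real.log s) := by
  rcases hr.eq_or_lt with rfl | hr
  · simp
  rw [integral_Ioi_of_hasDerivAt_of_tendsto'
    (fun t ht => hasDerivAt_mul_log_add_mul_sub_log_one_add hr hs ht)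
    (integrableOn_sq_div_add_mul_sub_div hr.le hs)
    (tendsto_mul_log_add_mul_sub_log_one_add hr hs)]
  simp only [zero_mul, add_zero, Real.log_one, sub_zero]
  ring

lemma integrableOn_mul_sq_div_add_mul_sub_div {w : ℝ} (hr : 0 ≤ r) (hs : 0 ≤ s)
    (hw : s = 0 → w * r = 0) :
    IntegrableOn (fun t => w * (r ^ 2 / (s + t * r) - r / (1 + t))) (Set.Ioi 0) := by
  rcases hs.eq_or_lt with rfl | hs
  · rcases mul_eq_zero.1 (hw rfl) with rfl | rfl <;> simp
  · exact (integrableOn_sq_div_add_mul_sub_div hr hs).const_mul w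

lemma integral_mul_sq_div_add_mul_sub_div {w : ℝ} (hr : 0 ≤ r) (hs : 0 ≤ s)
    (hw : s = 0 → w * r = 0) :
    ∫ t in Set.Ioi (0 : ℝ), w * (r ^ 2 / (s + t * r) - r / (1 + t))
      = w * (r * (Real.log r - Real.log s)) := by
  rcases hs.eq_or_lt with rfl | hs
  · rcases mul_eq_zero.1 (hw rfl) with rfl | rfl <;> simp
  · rw [integral_const_mul, integral_sq_div_add_mul_sub_div hr hs]

end ScalarIntegral

section Spectral

lemma trace_conjTranspose_mul_eq_sum {m n : Type*} [Fintype m] [Fintype n] (X Y : Matrix m n ℂ) :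
    trace (Xᴴ * Y) = ∑ j, ∑ i, star (X j i) * Y j i := by
  rw [Finset.sum_comm]
  simp only [trace, diag_apply, mul_apply, conjTranspose_apply]

variable {n : Type*} [Fintype n] [DecidableEq n] {ρ σ : Matrix n n ℂ}

lemma cfc_eq_eigenvectorUnitary_mul_diagonal (hρ : ρ.IsHermitian) (f : ℝ → ℝ) :
    cfc f ρ = (hρ.eigenvectorUnitary : Matrix n n ℂ) *
      diagonal (fun i => (f (hρ.eigenvalues i) : ℂ)) * (hρ.eigenvectorUnitary : Matrix n n ℂ)ᴴ := by
  rw [hρ.cfc_eq, Matrix.IsHermitian.cfc, Unitary.conjStarAlgAut_apply]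
  rfl

lemma conjTranspose_eigenvectorUnitary_mul_self (hρ : ρ.IsHermitian) :
    (hρ.eigenvectorUnitary : Matrix n n ℂ)ᴴ * hρ.eigenvectorUnitary = 1 :=
  Unitary.coe_star_mul_self hρ.eigenvectorUnitary

lemma conjTranspose_eigenvectorUnitary_mul_cancel_left (hρ : ρ.IsHermitian) (M : Matrix n n ℂ) :
    (hρ.eigenvectorUnitary : Matrix n n ℂ)ᴴ * (hρ.eigenvectorUnitary * M) = M := by
  rw [← Matrix.mul_assoc, conjTranspose_eigenvectorUnitary_mul_self, Matrix.one_mul]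

lemma eigenvectorUnitary_mul_conjTranspose_self (hρ : ρ.IsHermitian) :
    (hρ.eigenvectorUnitary : Matrix n n ℂ) * (hρ.eigenvectorUnitary : Matrix n n ℂ)ᴴ = 1 :=
  Unitary.coe_mul_star_self hρ.eigenvectorUnitary

lemma mul_eigenvectorUnitary (hρ : ρ.IsHermitian) :
    ρ * hρ.eigenvectorUnitary =
      hρ.eigenvectorUnitary * diagonal (fun i => (hρ.eigenvalues i : ℂ)) := by
  have hspectral := cfc_eq_eigenvectorUnitary_mul_diagonal hρ id
  rw [cfc_id ℝ ρ hρ.isSelfAdjoint] at hspectral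
  refine (congrArg (· * (hρ.eigenvectorUnitary : Matrix n n ℂ)) hspectral).trans ?_
  simp only [Matrix.mul_assoc, conjTranspose_eigenvectorUnitary_mul_self, Matrix.mul_one, id]

/-- The unitary matrix of inner products `⟪uⱼ, vᵢ⟫` between the eigenvectors `uⱼ` of `σ` and `vᵢ`
of `ρ`. It expresses traces mixing functions of `ρ` and functions of `σ` through the two spectra. -/
def eigenOverlap (hσ : σ.IsHermitian) (hρ : ρ.IsHermitian) : Matrix n n ℂ :=
  (hσ.eigenvectorUnitary : Matrix n n ℂ)ᴴ * hρ.eigenvectorUnitary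

lemma re_trace_cfc_mul_cfc (hρ : ρ.IsHermitian) (hσ : σ.IsHermitian) (f g : ℝ → ℝ) :
    (trace (cfc f ρ * cfc g σ)).re = ∑ j, ∑ i, Complex.normSq (eigenOverlap hσ hρ j i) *
      (f (hρ.eigenvalues i) * g (hσ.eigenvalues j)) := by
  set W := eigenOverlap hσ hρ with hW
  have hcycle : trace (cfc f ρ * cfc g σ) =
      trace (Wᴴ * (diagonal (fun j => (g (hσ.eigenvalues j) : ℂ)) * W *
        diagonal (fun i => (f (hρ.eigenvalues i) : ℂ)))) := by
    rw [cfc_eq_eigenvectorUnitary_mul_diagonal hρ, cfc_eq_eigenvectorUnitary_mul_diagonal hσ,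
      ← Matrix.mul_assoc Wᴴ, Matrix.trace_mul_comm _ (diagonal _), hW, eigenOverlap,
      conjTranspose_mul, conjTranspose_conjTranspose, Matrix.mul_assoc _ (diagonal _),
      Matrix.mul_assoc, Matrix.trace_mul_comm]
    simp only [Matrix.mul_assoc]
  rw [hcycle, trace_conjTranspose_mul_eq_sum]
  simp only [Complex.re_sum, mul_diagonal, diagonal_mul, Complex.normSq_apply]
  refine Finset.sum_congr rfl fun j _ => Finset.sum_congr rfl fun i _ => ?_
  simp only [Complex.star_def, Complex.mul_re, Complex.conj_re, Complex.ofReal_re,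
    Complex.ofReal_im, zero_mul, sub_zero, Complex.mul_im, add_zero, mul_zero, Complex.conj_im]
  ring

end Spectral

section ResolventForm

variable {n : Type*} [Fintype n]

/-- The concave quadratic functional of `X` whose maximum over `X` is
`⟨ρ, (L_σ + t R_ρ)⁻¹ ρ⟩` in the Hilbert-Schmidt inner product, where `L_σ` and `R_ρ` denote left
multiplication by `σ` and right multiplication by `ρ`. -/
def resolventForm (t : ℝ) (ρ σ X : Matrix n n ℂ) : ℝ :=
  2 * (trace (Xᴴ * ρ)).re - (trace (Xᴴ * σ * X)).re - t * (trace (X * ρ * Xᴴ)).re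

/-- The quasi-entropy `⟨ρ, (L_σ + t R_ρ)⁻¹ ρ⟩`, encoded variationally so that no support condition
on `ρ` and `σ` is involved. -/
def resolventQuasiEntropy (t : ℝ) (ρ σ : Matrix n n ℂ) : ℝ :=
  ⨆ X, resolventForm t ρ σ X

lemma resolventForm_sum {ι : Type*} [Fintype ι] (p : ι → ℝ) (ρ σ : ι → Matrix n n ℂ) (t : ℝ)
    (X : Matrix n n ℂ) :
    resolventForm t (∑ k, (p k : ℂ) • ρ k) (∑ k, (p k : ℂ) • σ k) X
      = ∑ k, p k * resolventForm t (ρ k) (σ k) X := by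
  simp only [resolventForm, Matrix.sum_mul, trace_sum, Matrix.mul_smul,
    Matrix.smul_mul, trace_smul, smul_eq_mul, Complex.re_sum, Complex.re_ofReal_mul,
    Finset.mul_sum, ← Finset.sum_sub_distrib]
  exact Finset.sum_congr rfl fun k _ => by ring

lemma resolventForm_antitone {ρ σ σ' : Matrix n n ℂ} (h : (σ' - σ).PosSemidef) (t : ℝ)
    (X : Matrix n n ℂ) : resolventForm t ρ σ' X ≤ resolventForm t ρ σ X := by
  have hX := (Complex.le_def.1 (h.conjTranspose_mul_mul_same X).trace_nonneg).1
  simp only [Matrix.mul_sub, Matrix.sub_mul, trace_sub, Complex.zero_re, Complex.sub_re] at hX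
  unfold resolventForm
  linarith

lemma complete_square_div {q r : ℝ} (hq : q = 0 → r = 0) (w y : ℂ) :
    2 * (star y * w).re * r - q * Complex.normSq y
      = Complex.normSq w * (r ^ 2 / q) - q * Complex.normSq (y - (r / q : ℝ) * w) := by
  rcases eq_or_ne q 0 with rfl | hq0
  · simp [hq rfl]
  · simp only [Complex.normSq_apply, Complex.star_def, Complex.mul_re, Complex.mul_im,
      Complex.conj_re, Complex.conj_im, Complex.sub_re, Complex.sub_im, Complex.ofReal_re,
      Complex.ofReal_im]
    field_simp
    ring

section Eigenbasis

variable [DecidableEq n] {ρ σ : Matrix n n ℂ}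

lemma resolventForm_eq_sum_eigenvalues (hρ : ρ.IsHermitian) (hσ : σ.IsHermitian) (t : ℝ)
    (Y : Matrix n n ℂ) :
    resolventForm t ρ σ
        (hσ.eigenvectorUnitary * Y * (hρ.eigenvectorUnitary : Matrix n n ℂ)ᴴ)
      = ∑ j, ∑ i, (2 * (star (Y j i) * eigenOverlap hσ hρ j i).re * hρ.eigenvalues i
        - (hσ.eigenvalues j + t * hρ.eigenvalues i) * Complex.normSq (Y j i)) := by
  set V : Matrix n n ℂ := ↑hρ.eigenvectorUnitary
  set U : Matrix n n ℂ := ↑hσ.eigenvectorUnitary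
  set R : Matrix n n ℂ := diagonal fun i => (hρ.eigenvalues i : ℂ)
  set S : Matrix n n ℂ := diagonal fun j => (hσ.eigenvalues j : ℂ)
  have hρV : ρ * V = V * R := mul_eigenvectorUnitary hρ
  have hσU : σ * U = U * S := mul_eigenvectorUnitary hσ
  have hV (M : Matrix n n ℂ) : Vᴴ * (V * M) = M :=
    conjTranspose_eigenvectorUnitary_mul_cancel_left hρ M
  have hU (M : Matrix n n ℂ) : Uᴴ * (U * M) = M :=
    conjTranspose_eigenvectorUnitary_mul_cancel_left hσ M
  have hlinear : trace ((U * Y * Vᴴ)ᴴ * ρ) = trace (Yᴴ * (eigenOverlap hσ hρ * R)) := by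
    simp only [conjTranspose_mul, conjTranspose_conjTranspose, eigenOverlap, Matrix.mul_assoc]
    rw [Matrix.trace_mul_comm]
    simp only [Matrix.mul_assoc, hρV, U, V]
  have hleft : trace ((U * Y * Vᴴ)ᴴ * σ * (U * Y * Vᴴ)) = trace (Yᴴ * (S * Y)) := by
    simp only [conjTranspose_mul, conjTranspose_conjTranspose, Matrix.mul_assoc]
    rw [Matrix.trace_mul_comm, ← Matrix.mul_assoc σ, hσU]
    simp only [Matrix.mul_assoc, hU]
    rw [conjTranspose_eigenvectorUnitary_mul_self, Matrix.mul_one]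
  have hright : trace (U * Y * Vᴴ * ρ * (U * Y * Vᴴ)ᴴ) = trace (Yᴴ * (Y * R)) := by
    simp only [conjTranspose_mul, conjTranspose_conjTranspose, Matrix.mul_assoc]
    rw [Matrix.trace_mul_comm, ← Matrix.mul_assoc ρ, hρV]
    simp only [Matrix.mul_assoc, hV]
    rw [conjTranspose_eigenvectorUnitary_mul_self, Matrix.mul_one, Matrix.trace_mul_comm Yᴴ,
      Matrix.mul_assoc]
  simp only [resolventForm, hlinear, hleft, hright, trace_conjTranspose_mul_eq_sum,
    Complex.re_sum, Finset.mul_sum, ← Finset.sum_sub_distrib, mul_diagonal, diagonal_mul,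
    Complex.normSq_apply, R, S]
  refine Finset.sum_congr rfl fun j _ => Finset.sum_congr rfl fun i _ => ?_
  simp only [Complex.star_def, Complex.mul_re, Complex.conj_re, Complex.ofReal_re,
    Complex.ofReal_im, mul_zero, sub_zero, Complex.conj_im, Complex.mul_im]
  ring

lemma resolventForm_eq_sum_sub_sum_normSq (hρ : ρ.PosSemidef) (hσ : σ.PosSemidef) {t : ℝ}
    (ht : 0 < t) (Y : Matrix n n ℂ) :
    resolventForm t ρ σ
        (hσ.1.eigenvectorUnitary * Y * (hρ.1.eigenvectorUnitary : Matrix n n ℂ)ᴴ)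
      = ∑ j, ∑ i, (Complex.normSq (eigenOverlap hσ.1 hρ.1 j i) *
          (hρ.1.eigenvalues i ^ 2 / (hσ.1.eigenvalues j + t * hρ.1.eigenvalues i))
        - (hσ.1.eigenvalues j + t * hρ.1.eigenvalues i) * Complex.normSq (Y j i -
          (hρ.1.eigenvalues i / (hσ.1.eigenvalues j + t * hρ.1.eigenvalues i) : ℝ) *
            eigenOverlap hσ.1 hρ.1 j i)) := by
  rw [resolventForm_eq_sum_eigenvalues]
  refine Finset.sum_congr rfl fun j _ => Finset.sum_congr rfl fun i _ =>
    complete_square_div (fun h => ?_) _ _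
  have hr := hρ.eigenvalues_nonneg i
  nlinarith [hσ.eigenvalues_nonneg j, mul_nonneg ht.le hr]

lemma isGreatest_range_resolventForm (hρ : ρ.PosSemidef) (hσ : σ.PosSemidef) {t : ℝ}
    (ht : 0 < t) :
    IsGreatest (Set.range (resolventForm t ρ σ))
      (∑ j, ∑ i, Complex.normSq (eigenOverlap hσ.1 hρ.1 j i) *
        (hρ.1.eigenvalues i ^ 2 / (hσ.1.eigenvalues j + t * hρ.1.eigenvalues i))) := by
  constructor
  · refine ⟨hσ.1.eigenvectorUnitary * Matrix.of (fun j i =>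
      (hρ.1.eigenvalues i / (hσ.1.eigenvalues j + t * hρ.1.eigenvalues i) : ℝ) *
        eigenOverlap hσ.1 hρ.1 j i) * (hρ.1.eigenvectorUnitary : Matrix n n ℂ)ᴴ, ?_⟩
    simp only [resolventForm_eq_sum_sub_sum_normSq hρ hσ ht, of_apply, sub_self, map_zero,
      mul_zero, sub_zero]
  · rintro _ ⟨X, rfl⟩
    set V : Matrix n n ℂ := ↑hρ.1.eigenvectorUnitary with hV
    set U : Matrix n n ℂ := ↑hσ.1.eigenvectorUnitary with hU
    have hX : X = U * (Uᴴ * X * V) * Vᴴ := by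
      simp only [Matrix.mul_assoc, hV, eigenvectorUnitary_mul_conjTranspose_self, Matrix.mul_one]
      rw [← Matrix.mul_assoc, hU, eigenvectorUnitary_mul_conjTranspose_self, Matrix.one_mul]
    rw [hX, resolventForm_eq_sum_sub_sum_normSq hρ hσ ht]
    refine Finset.sum_le_sum fun j _ => Finset.sum_le_sum fun i _ =>
      sub_le_self _ (mul_nonneg ?_ (Complex.normSq_nonneg _))
    exact add_nonneg (hσ.eigenvalues_nonneg j) (mul_nonneg ht.le (hρ.eigenvalues_nonneg i))

lemma resolventQuasiEntropy_eq_sum_eigenvalues (hρ : ρ.PosSemidef) (hσ : σ.PosSemidef) {t : ℝ}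
    (ht : 0 < t) :
    resolventQuasiEntropy t ρ σ = ∑ j, ∑ i, Complex.normSq (eigenOverlap hσ.1 hρ.1 j i) *
        (hρ.1.eigenvalues i ^ 2 / (hσ.1.eigenvalues j + t * hρ.1.eigenvalues i)) :=
  (isGreatest_range_resolventForm hρ hσ ht).csSup_eq

end Eigenbasis

variable {ρ σ : Matrix n n ℂ}

lemma resolventForm_le_resolventQuasiEntropy (hρ : ρ.PosSemidef) (hσ : σ.PosSemidef) {t : ℝ}
    (ht : 0 < t) (X : Matrix n n ℂ) :
    resolventForm t ρ σ X ≤ resolventQuasiEntropy t ρ σ := by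
  classical
  exact le_ciSup (isGreatest_range_resolventForm hρ hσ ht).bddAbove X

lemma resolventQuasiEntropy_antitone {σ' : Matrix n n ℂ} (hρ : ρ.PosSemidef) (hσ : σ.PosSemidef)
    (hσσ' : (σ' - σ).PosSemidef) {t : ℝ} (ht : 0 < t) :
    resolventQuasiEntropy t ρ σ' ≤ resolventQuasiEntropy t ρ σ :=
  ciSup_le fun X => (resolventForm_antitone hσσ' t X).trans
    (resolventForm_le_resolventQuasiEntropy hρ hσ ht X)

lemma resolventQuasiEntropy_sum_le {ι : Type*} [Fintype ι] {p : ι → ℝ} {ρ σ : ι → Matrix n n ℂ}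
    (hp : ∀ k, 0 ≤ p k) (hρ : ∀ k, (ρ k).PosSemidef) (hσ : ∀ k, (σ k).PosSemidef) {t : ℝ}
    (ht : 0 < t) :
    resolventQuasiEntropy t (∑ k, (p k : ℂ) • ρ k) (∑ k, (p k : ℂ) • σ k)
      ≤ ∑ k, p k * resolventQuasiEntropy t (ρ k) (σ k) := by
  refine ciSup_le fun X => ?_
  rw [resolventForm_sum]
  exact Finset.sum_le_sum fun k _ => mul_le_mul_of_nonneg_left
    (resolventForm_le_resolventQuasiEntropy (hρ k) (hσ k) ht X) (hp k)

end ResolventForm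

section Kernel

variable {n : Type*}

lemma mulVec_eq_zero_of_posSemidef_sub [Fintype n] {A B : Matrix n n ℂ} (hA : A.PosSemidef)
    (hAB : (B - A).PosSemidef) {v : n → ℂ} (hv : B *ᵥ v = 0) : A *ᵥ v = 0 := by
  rw [← hA.dotProduct_mulVec_zero_iff]
  have hle := hAB.dotProduct_mulVec_nonneg v
  rw [sub_mulVec, hv, dotProduct_sub, dotProduct_zero, zero_sub, Left.nonneg_neg_iff] at hle
  exact le_antisymm hle (hA.dotProduct_mulVec_nonneg v)

variable {ι : Type*} [Fintype ι] {p : ι → ℝ} {ρ : ι → Matrix n n ℂ}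

lemma posSemidef_sum_smul (hp : ∀ k, 0 ≤ p k) (hρ : ∀ k, (ρ k).PosSemidef) :
    (∑ k, (p k : ℂ) • ρ k).PosSemidef :=
  posSemidef_sum _ fun k _ => (hρ k).smul (by exact_mod_cast hp k)

lemma posSemidef_sum_smul_sub_smul (hp : ∀ k, 0 ≤ p k) (hρ : ∀ k, (ρ k).PosSemidef) (k : ι) :
    ((∑ l, (p l : ℂ) • ρ l) - (p k : ℂ) • ρ k).PosSemidef := by
  classical
  rw [← Finset.sum_erase_eq_sub (Finset.mem_univ k)]
  exact posSemidef_sum _ fun l _ => (hρ l).smul (by exact_mod_cast hp l)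

lemma sum_smul_mulVec_eq_zero [Fintype n] {σ : ι → Matrix n n ℂ} (hp : ∀ k, 0 ≤ p k)
    (hσ : ∀ k, (σ k).PosSemidef) (hker : ∀ k v, σ k *ᵥ v = 0 → ρ k *ᵥ v = 0) {v : n → ℂ}
    (hv : (∑ k, (p k : ℂ) • σ k) *ᵥ v = 0) : (∑ k, (p k : ℂ) • ρ k) *ᵥ v = 0 := by
  rw [sum_mulVec]
  refine Finset.sum_eq_zero fun k _ => ?_
  have hk : (p k : ℂ) • (σ k *ᵥ v) = 0 := by
    rw [← smul_mulVec]
    exact mulVec_eq_zero_of_posSemidef_sub ((hσ k).smul (by exact_mod_cast hp k))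
      (posSemidef_sum_smul_sub_smul hp hσ k) hv
  rcases smul_eq_zero.1 hk with h | h
  · rw [h, zero_smul, zero_mulVec]
  · rw [smul_mulVec, hker k v h, smul_zero]

end Kernel

section QuasiEntropyIntegrand

variable {n : Type*} [Fintype n] {ρ σ : Matrix n n ℂ}

section Eigenbasis

variable [DecidableEq n]

lemma re_trace_eq_sum_eigenOverlap (hρ : ρ.IsHermitian) (hσ : σ.IsHermitian) :
    ρ.trace.re = ∑ j, ∑ i, Complex.normSq (eigenOverlap hσ hρ j i) * hρ.eigenvalues i := by
  have htrace := re_trace_cfc_mul_cfc hρ hσ id 1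
  rw [cfc_id ℝ ρ hρ.isSelfAdjoint, cfc_one ℝ σ hσ.isSelfAdjoint, Matrix.mul_one] at htrace
  simpa using htrace

lemma resolventQuasiEntropy_sub_eq_sum (hρ : ρ.PosSemidef) (hσ : σ.PosSemidef) {t : ℝ}
    (ht : 0 < t) :
    resolventQuasiEntropy t ρ σ - ρ.trace.re / (1 + t)
      = ∑ j, ∑ i, Complex.normSq (eigenOverlap hσ.1 hρ.1 j i) *
        (hρ.1.eigenvalues i ^ 2 / (hσ.1.eigenvalues j + t * hρ.1.eigenvalues i)
          - hρ.1.eigenvalues i / (1 + t)) := by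
  simp only [resolventQuasiEntropy_eq_sum_eigenvalues hρ hσ ht,
    re_trace_eq_sum_eigenOverlap hρ.1 hσ.1, Finset.sum_div, ← Finset.sum_sub_distrib, mul_sub,
    mul_div_assoc]

lemma normSq_eigenOverlap_mul_eigenvalue_eq_zero (hρ : ρ.IsHermitian) (hσ : σ.IsHermitian)
    (hker : ∀ v, σ *ᵥ v = 0 → ρ *ᵥ v = 0) {j : n} (hj : hσ.eigenvalues j = 0) (i : n) :
    Complex.normSq (eigenOverlap hσ hρ j i) * hρ.eigenvalues i = 0 := by
  set V : Matrix n n ℂ := ↑hρ.eigenvectorUnitary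
  set U : Matrix n n ℂ := ↑hσ.eigenvectorUnitary
  have hσu : σ *ᵥ hσ.eigenvectorBasis j = 0 := by rw [hσ.mulVec_eigenvectorBasis, hj, zero_smul]
  have hcol (k : n) : (ρ * U) k j = 0 := congrFun (hker _ hσu) k
  have hentry : ((ρ * U)ᴴ * V) j i = eigenOverlap hσ hρ j i * hρ.eigenvalues i := by
    rw [conjTranspose_mul, hρ.eq, Matrix.mul_assoc, mul_eigenvectorUnitary, ← Matrix.mul_assoc,
      mul_diagonal]
    rfl
  have hzero : eigenOverlap hσ hρ j i * hρ.eigenvalues i = 0 := by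
    rw [← hentry, mul_apply]
    exact Finset.sum_eq_zero fun k _ => by
      rw [conjTranspose_apply, hcol, star_zero, zero_mul]
  rcases mul_eq_zero.1 hzero with h | h
  · rw [h, map_zero, zero_mul]
  · rw [Complex.ofReal_eq_zero.1 h, mul_zero]

end Eigenbasis

lemma integrableOn_resolventQuasiEntropy_sub (hρ : ρ.PosSemidef) (hσ : σ.PosSemidef)
    (hker : ∀ v, σ *ᵥ v = 0 → ρ *ᵥ v = 0) :
    IntegrableOn (fun t => resolventQuasiEntropy t ρ σ - ρ.trace.re / (1 + t)) (Set.Ioi 0) := by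
  classical
  refine IntegrableOn.congr_fun ?_
    (fun t ht => (resolventQuasiEntropy_sub_eq_sum hρ hσ ht).symm) measurableSet_Ioi
  exact integrable_finsetSum _ fun j _ => integrable_finsetSum _ fun i _ =>
    integrableOn_mul_sq_div_add_mul_sub_div (hρ.eigenvalues_nonneg i) (hσ.eigenvalues_nonneg j)
      fun hj => normSq_eigenOverlap_mul_eigenvalue_eq_zero hρ.1 hσ.1 hker hj i

end QuasiEntropyIntegrand

section RelEntropy

variable {n : Type*} [Fintype n] [DecidableEq n] {ρ σ : Matrix n n ℂ}

/-- Umegaki's quantum relative entropy `D(ρ‖σ) = tr ρ (log₂ ρ - log₂ σ)`. It has this meaning only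
if `ker σ ≤ ker ρ`; otherwise the value reflects the convention `log 0 = 0` and not `+∞`. -/
def relEntropy (ρ σ : Matrix n n ℂ) : ℝ :=
  (trace (ρ * (cfc (Real.logb 2) ρ - cfc (Real.logb 2) σ))).re

lemma mul_cfc_eq_cfc_mul (hρ : ρ.IsHermitian) (f : ℝ → ℝ) :
    ρ * cfc f ρ = cfc (fun x => x * f x) ρ := by
  have hcont (g : ℝ → ℝ) : ContinuousOn g (spectrum ℝ ρ) :=
    Matrix.finite_real_spectrum.continuousOn g
  rw [cfc_mul (fun x => x) f ρ (hcont _) (hcont _), cfc_id' ℝ ρ hρ.isSelfAdjoint]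

lemma log_two_mul_relEntropy (hρ : ρ.IsHermitian) (hσ : σ.IsHermitian) :
    Real.log 2 * relEntropy ρ σ = ∑ j, ∑ i, Complex.normSq (eigenOverlap hσ hρ j i) *
      (hρ.eigenvalues i *
        (Real.log (hρ.eigenvalues i) - Real.log (hσ.eigenvalues j))) := by
  have hself := re_trace_cfc_mul_cfc hρ hσ (fun x => x * Real.logb 2 x) 1
  rw [← mul_cfc_eq_cfc_mul hρ, cfc_one ℝ σ hσ.isSelfAdjoint, Matrix.mul_one] at hself
  have hcross := re_trace_cfc_mul_cfc hρ hσ id (Real.logb 2)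
  rw [cfc_id ℝ ρ hρ.isSelfAdjoint] at hcross
  rw [relEntropy, Matrix.mul_sub, trace_sub, Complex.sub_re, hself, hcross]
  simp only [← Finset.sum_sub_distrib, Finset.mul_sum]
  refine Finset.sum_congr rfl fun j _ => Finset.sum_congr rfl fun i _ => ?_
  have hlog : Real.log 2 ≠ 0 := (Real.log_pos one_lt_two).ne'
  simp only [Pi.one_apply, id, Real.logb]
  field_simp

theorem log_two_mul_relEntropy_eq_integral (hρ : ρ.PosSemidef) (hσ : σ.PosSemidef)
    (hker : ∀ v, σ *ᵥ v = 0 → ρ *ᵥ v = 0) :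
    Real.log 2 * relEntropy ρ σ
      = ∫ t in Set.Ioi (0 : ℝ), (resolventQuasiEntropy t ρ σ - ρ.trace.re / (1 + t)) := by
  have hweight (j i : n) (hj : hσ.1.eigenvalues j = 0) :=
    normSq_eigenOverlap_mul_eigenvalue_eq_zero hρ.1 hσ.1 hker hj i
  have hint (j i : n) := integrableOn_mul_sq_div_add_mul_sub_div (hρ.eigenvalues_nonneg i)
    (hσ.eigenvalues_nonneg j) (hweight j i)
  rw [setIntegral_congr_fun measurableSet_Ioi
      fun t ht => resolventQuasiEntropy_sub_eq_sum hρ hσ ht,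
    integral_finsetSum _ fun j _ => integrable_finsetSum _ fun i _ => hint j i,
    log_two_mul_relEntropy hρ.1 hσ.1]
  refine Finset.sum_congr rfl fun j _ => ?_
  rw [integral_finsetSum _ fun i _ => hint j i]
  exact Finset.sum_congr rfl fun i _ => (integral_mul_sq_div_add_mul_sub_div
    (hρ.eigenvalues_nonneg i) (hσ.eigenvalues_nonneg j) (hweight j i)).symm

theorem relEntropy_antitone_right {σ' : Matrix n n ℂ} (hρ : ρ.PosSemidef) (hσ : σ.PosSemidef)
    (hσσ' : (σ' - σ).PosSemidef) (hker : ∀ v, σ *ᵥ v = 0 → ρ *ᵥ v = 0) :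
    relEntropy ρ σ' ≤ relEntropy ρ σ := by
  have hσ' : σ'.PosSemidef := by simpa using hσ.add hσσ'
  have hker' (v : n → ℂ) (hv : σ' *ᵥ v = 0) : ρ *ᵥ v = 0 :=
    hker v (mulVec_eq_zero_of_posSemidef_sub hσ hσσ' hv)
  refine le_of_mul_le_mul_left ?_ (Real.log_pos one_lt_two)
  rw [log_two_mul_relEntropy_eq_integral hρ hσ' hker',
    log_two_mul_relEntropy_eq_integral hρ hσ hker]
  exact setIntegral_mono_on (integrableOn_resolventQuasiEntropy_sub hρ hσ' hker')
    (integrableOn_resolventQuasiEntropy_sub hρ hσ hker) measurableSet_Ioi fun t ht =>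
    sub_le_sub_right (resolventQuasiEntropy_antitone hρ hσ hσσ' ht) _

theorem relEntropy_sum_le {ι : Type*} [Fintype ι] {p : ι → ℝ} {ρ σ : ι → Matrix n n ℂ}
    (hp : ∀ k, 0 ≤ p k) (hρ : ∀ k, (ρ k).PosSemidef) (hσ : ∀ k, (σ k).PosSemidef)
    (hker : ∀ k v, σ k *ᵥ v = 0 → ρ k *ᵥ v = 0) :
    relEntropy (∑ k, (p k : ℂ) • ρ k) (∑ k, (p k : ℂ) • σ k)
      ≤ ∑ k, p k * relEntropy (ρ k) (σ k) := by
  refine le_of_mul_le_mul_left ?_ (Real.log_pos one_lt_two)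
  have hker_sum (v : n → ℂ) (hv : (∑ k, (p k : ℂ) • σ k) *ᵥ v = 0) :=
    sum_smul_mulVec_eq_zero hp hσ hker hv
  have hint (k : ι) := (integrableOn_resolventQuasiEntropy_sub (hρ k) (hσ k) (hker k)).const_mul
    (p k)
  have hright : Real.log 2 * ∑ k, p k * relEntropy (ρ k) (σ k) = ∫ t in Set.Ioi (0 : ℝ),
      ∑ k, p k * (resolventQuasiEntropy t (ρ k) (σ k) - (ρ k).trace.re / (1 + t)) := by
    rw [integral_finsetSum _ fun k _ => hint k, Finset.mul_sum]
    simp only [integral_const_mul, ← log_two_mul_relEntropy_eq_integral (hρ _) (hσ _) (hker _)]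
    exact Finset.sum_congr rfl fun k _ => mul_left_comm _ _ _
  rw [hright, log_two_mul_relEntropy_eq_integral (posSemidef_sum_smul hp hρ)
    (posSemidef_sum_smul hp hσ) hker_sum]
  refine setIntegral_mono_on (integrableOn_resolventQuasiEntropy_sub (posSemidef_sum_smul hp hρ)
    (posSemidef_sum_smul hp hσ) hker_sum) (integrable_finsetSum _ fun k _ => hint k)
    measurableSet_Ioi fun t ht => ?_
  have htrace : (∑ k, (p k : ℂ) • ρ k).trace.re = ∑ k, p k * (ρ k).trace.re := by
    simp only [trace_sum, trace_smul, smul_eq_mul, Complex.re_sum, Complex.re_ofReal_mul]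
  simp only [htrace, mul_sub, Finset.sum_sub_distrib, ← mul_div_assoc, ← Finset.sum_div]
  exact sub_le_sub_right (resolventQuasiEntropy_sum_le hp hρ hσ ht) _

end RelEntropy

section Entropy

variable {n ι : Type} [Fintype n] [Fintype ι] {p : ι → ℝ} {ω : ι → Matrix n n ℂ}

lemma isDensity_sum_smul (hp : IsProbDist p) (hω : ∀ k, IsDensity (ω k)) :
    IsDensity (∑ k, (p k : ℂ) • ω k) := by
  refine ⟨posSemidef_sum_smul hp.1 fun k => (hω k).1, ?_⟩
  simp only [trace_sum, trace_smul, (hω _).2, smul_eq_mul, mul_one]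
  exact_mod_cast hp.2

variable [DecidableEq n] {ρ σ : Matrix n n ℂ}

lemma re_trace_cfc (hρ : ρ.IsHermitian) (f : ℝ → ℝ) :
    (trace (cfc f ρ)).re = ∑ i, f (hρ.eigenvalues i) := by
  rw [cfc_eq_eigenvectorUnitary_mul_diagonal hρ, Matrix.trace_mul_comm, ← Matrix.mul_assoc,
    conjTranspose_eigenvectorUnitary_mul_self, Matrix.one_mul, trace_diagonal]
  simp only [Complex.re_sum, Complex.ofReal_re]

lemma vnEntropy_eq_neg_re_trace (hρ : ρ.IsHermitian) :
    vnEntropy ρ = -(trace (ρ * cfc (Real.logb 2) ρ)).re := by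
  rw [mul_cfc_eq_cfc_mul hρ, re_trace_cfc hρ, vnEntropy, dif_pos hρ]

lemma relEntropy_eq_neg_vnEntropy_sub (hρ : ρ.IsHermitian) :
    relEntropy ρ σ = -vnEntropy ρ - (trace (ρ * cfc (Real.logb 2) σ)).re := by
  rw [vnEntropy_eq_neg_re_trace hρ, relEntropy, Matrix.mul_sub, trace_sub, Complex.sub_re, neg_neg]

lemma relEntropy_smul_self (hρ : ρ.IsHermitian) {p : ℝ} (hp : 0 < p) :
    relEntropy ρ ((p : ℂ) • ρ) = -Real.logb 2 p * ρ.trace.re := by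
  have hcfc : cfc (Real.logb 2) ((p : ℂ) • ρ) = cfc (fun x => Real.logb 2 (p * x)) ρ := by
    rw [Complex.coe_smul]
    exact (cfc_comp_smul p (Real.logb 2) ρ ((Matrix.finite_real_spectrum.image _).continuousOn _)
      hρ.isSelfAdjoint).symm
  have htrace : ρ.trace.re = ∑ i, hρ.eigenvalues i := by
    simpa only [cfc_id' ℝ ρ hρ.isSelfAdjoint] using re_trace_cfc hρ fun x => x
  rw [relEntropy, hcfc, Matrix.mul_sub, trace_sub, Complex.sub_re, mul_cfc_eq_cfc_mul hρ,
    mul_cfc_eq_cfc_mul hρ, re_trace_cfc hρ, re_trace_cfc hρ, htrace, ← Finset.sum_sub_distrib,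
    Finset.mul_sum]
  refine Finset.sum_congr rfl fun i _ => ?_
  rcases eq_or_ne (hρ.eigenvalues i) 0 with h | h
  · simp only [h, zero_mul, mul_zero, sub_zero]
  · rw [Real.logb_mul hp.ne' h]
    ring

lemma sum_mul_relEntropy_sum_smul (hp : ∀ k, 0 ≤ p k) (hω : ∀ k, (ω k).PosSemidef) :
    ∑ k, p k * relEntropy (ω k) (∑ l, (p l : ℂ) • ω l)
      = vnEntropy (∑ l, (p l : ℂ) • ω l) - ∑ k, p k * vnEntropy (ω k) := by
  simp only [fun k => relEntropy_eq_neg_vnEntropy_sub (σ := ∑ l, (p l : ℂ) • ω l) (hω k).1,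
    vnEntropy_eq_neg_re_trace (posSemidef_sum_smul hp hω).1, Matrix.sum_mul, Matrix.smul_mul,
    trace_sum, trace_smul, smul_eq_mul, Complex.re_sum, Complex.re_ofReal_mul, mul_sub, mul_neg,
    Finset.sum_sub_distrib, Finset.sum_neg_distrib]
  ring

-- `D(ω_k‖Ω) ≤ D(ω_k‖p_k ω_k) = -log p_k` for the mixture `Ω`, since `Ω ≥ p_k ω_k`.
lemma mul_relEntropy_sum_smul_le (hp : ∀ k, 0 ≤ p k) (hω : ∀ k, IsDensity (ω k)) (k : ι) :
    p k * relEntropy (ω k) (∑ l, (p l : ℂ) • ω l) ≤ -(p k * Real.logb 2 (p k)) := by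
  rcases (hp k).eq_or_lt with h | h
  · simp only [← h, zero_mul, neg_zero, le_refl]
  · have hker (v : n → ℂ) (hv : ((p k : ℂ) • ω k) *ᵥ v = 0) : ω k *ᵥ v = 0 := by
      rw [smul_mulVec] at hv
      exact (smul_eq_zero.1 hv).resolve_left (by exact_mod_cast h.ne')
    have hle := relEntropy_antitone_right (hω k).1 ((hω k).1.smul (by exact_mod_cast hp k))
      (posSemidef_sum_smul_sub_smul hp (fun l => (hω l).1) k) hker
    rw [relEntropy_smul_self (hω k).1.1 h, (hω k).2, Complex.one_re, mul_one] at hle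
    rw [← mul_neg]
    exact mul_le_mul_of_nonneg_left hle (hp k)

theorem vnEntropy_sum_smul_le (hp : ∀ k, 0 ≤ p k) (hω : ∀ k, IsDensity (ω k)) :
    vnEntropy (∑ k, (p k : ℂ) • ω k) ≤ ∑ k, p k * vnEntropy (ω k) + shannon p := by
  rw [← sub_le_iff_le_add', ← sum_mul_relEntropy_sum_smul hp fun k => (hω k).1, shannon,
    ← Finset.sum_neg_distrib]
  exact Finset.sum_le_sum fun k _ => mul_relEntropy_sum_smul_le hp hω k

lemma sum_eigenvalues_eq_one (hρ : IsDensity ρ) : ∑ i, hρ.1.1.eigenvalues i = 1 := by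
  simpa only [Complex.re_sum, RCLike.ofReal_eq_complex_ofReal, Complex.ofReal_re, Complex.one_re]
    using congrArg Complex.re (hρ.1.1.trace_eq_sum_eigenvalues.symm.trans hρ.2)

lemma eigenvalues_le_one (hρ : IsDensity ρ) (i : n) : hρ.1.1.eigenvalues i ≤ 1 := by
  rw [← sum_eigenvalues_eq_one hρ]
  exact Finset.single_le_sum (fun j _ => hρ.1.eigenvalues_nonneg j) (Finset.mem_univ i)

lemma vnEntropy_nonneg (hρ : IsDensity ρ) : 0 ≤ vnEntropy ρ := by
  rw [vnEntropy, dif_pos hρ.1.1, neg_nonneg]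
  exact Finset.sum_nonpos fun i _ => mul_nonpos_of_nonneg_of_nonpos (hρ.1.eigenvalues_nonneg i)
    (Real.logb_nonpos one_lt_two (hρ.1.eigenvalues_nonneg i) (eigenvalues_le_one hρ i))

lemma vnEntropy_le_card_div_log_two (hρ : ρ.PosSemidef) :
    vnEntropy ρ ≤ Fintype.card n / Real.log 2 := by
  have hterm (i : n) : -(hρ.1.eigenvalues i * Real.logb 2 (hρ.1.eigenvalues i))
      ≤ 1 / Real.log 2 := by
    have hle : -(hρ.1.eigenvalues i * Real.log (hρ.1.eigenvalues i)) ≤ 1 := by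
      rw [← neg_mul]
      exact (Real.negMulLog_le_one_sub_self (hρ.eigenvalues_nonneg i)).trans
        (sub_le_self 1 (hρ.eigenvalues_nonneg i))
    rw [Real.logb, ← mul_div_assoc, ← neg_div]
    exact div_le_div_of_nonneg_right hle (Real.log_pos one_lt_two).le
  rw [vnEntropy, dif_pos hρ.1, ← Finset.sum_neg_distrib, div_eq_mul_one_div, ← nsmul_eq_mul,
    ← Finset.card_univ]
  exact Finset.sum_le_card_nsmul _ _ _ fun i _ => hterm i

end Entropy

section PartialTrace

variable {A B : Type}

lemma ptraceA_eq_sum_submatrix [Fintype A] (ρ : Matrix (A × B) (A × B) ℂ) :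
    ptraceA ρ = ∑ a, ρ.submatrix (Prod.mk a) (Prod.mk a) := by
  ext b b'
  simp only [ptraceA, of_apply, Matrix.sum_apply, submatrix_apply]

lemma ptraceB_eq_sum_submatrix [Fintype B] (ρ : Matrix (A × B) (A × B) ℂ) :
    ptraceB ρ = ∑ b, ρ.submatrix (·, b) (·, b) := by
  ext a a'
  simp only [ptraceB, of_apply, Matrix.sum_apply, submatrix_apply]

section Linearity

variable {ι : Type*} [Fintype ι] (p : ι → ℝ) (ω : ι → Matrix (A × B) (A × B) ℂ)

lemma ptraceA_sum_smul [Fintype A] :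
    ptraceA (∑ k, (p k : ℂ) • ω k) = ∑ k, (p k : ℂ) • ptraceA (ω k) := by
  ext b b'
  simp only [ptraceA, Matrix.sum_apply, Matrix.smul_apply, of_apply, Finset.smul_sum]
  exact Finset.sum_comm

lemma ptraceB_sum_smul [Fintype B] :
    ptraceB (∑ k, (p k : ℂ) • ω k) = ∑ k, (p k : ℂ) • ptraceB (ω k) := by
  ext a a'
  simp only [ptraceB, Matrix.sum_apply, Matrix.smul_apply, of_apply, Finset.smul_sum]
  exact Finset.sum_comm

end Linearity

variable [Fintype A] [Fintype B] {ρ : Matrix (A × B) (A × B) ℂ}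

lemma isDensity_ptraceA (hρ : IsDensity ρ) : IsDensity (ptraceA ρ) := by
  refine ⟨?_, ?_⟩
  · rw [ptraceA_eq_sum_submatrix]
    exact posSemidef_sum _ fun a _ => hρ.1.submatrix _
  · rw [← hρ.2]
    simp only [trace, ptraceA, diag_apply, of_apply, Fintype.sum_prod_type_right]

lemma isDensity_ptraceB (hρ : IsDensity ρ) : IsDensity (ptraceB ρ) := by
  refine ⟨?_, ?_⟩
  · rw [ptraceB_eq_sum_submatrix]
    exact posSemidef_sum _ fun b _ => hρ.1.submatrix _
  · rw [← hρ.2]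
    simp only [trace, ptraceB, diag_apply, of_apply, Fintype.sum_prod_type]

lemma mulVec_eq_zero_of_submatrix_mulVec_eq_zero (hρ : ρ.PosSemidef) {v : A × B → ℂ}
    (hv : ∀ a, ρ.submatrix (Prod.mk a) (Prod.mk a) *ᵥ (fun b => v (a, b)) = 0) :
    ρ *ᵥ v = 0 := by
  classical
  let block (a : A) (x : A × B) : ℂ := if x.1 = a then v x else 0
  have hsum : v = ∑ a, block a := by
    ext x
    simp only [block, Finset.sum_apply, Finset.sum_ite_eq, Finset.mem_univ, if_true]
  rw [hsum, mulVec_sum]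
  refine Finset.sum_eq_zero fun a _ => (hρ.dotProduct_mulVec_zero_iff (block a)).1 ?_
  have hquad : star (block a) ⬝ᵥ ρ *ᵥ block a = star (fun b => v (a, b)) ⬝ᵥ
      ρ.submatrix (Prod.mk a) (Prod.mk a) *ᵥ fun b => v (a, b) := by
    simp only [dotProduct, mulVec, block, Pi.star_apply, submatrix_apply,
      Fintype.sum_prod_type_right, apply_ite star, star_zero, mul_ite, ite_mul, mul_zero, zero_mul,
      Finset.sum_ite_eq', Finset.mem_univ, if_true]
  rw [hquad, hv, dotProduct_zero]

variable [DecidableEq A]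

lemma trace_mul_one_kronecker (ρ : Matrix (A × B) (A × B) ℂ) (L : Matrix B B ℂ) :
    trace (ρ * ((1 : Matrix A A ℂ) ⊗ₖ L)) = trace (ptraceA ρ * L) := by
  simp only [trace, diag_apply, Matrix.mul_apply, kroneckerMap_apply, one_apply,
    Fintype.sum_prod_type, ptraceA, of_apply, ite_mul, one_mul, zero_mul, mul_ite, mul_zero,
    Finset.sum_ite_irrel, Finset.sum_const_zero, Finset.sum_ite_eq', Finset.mem_univ, if_true,
    Finset.sum_mul]
  rw [Finset.sum_comm]
  exact Finset.sum_congr rfl fun b _ => Finset.sum_comm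

lemma mulVec_eq_zero_of_one_kronecker_ptraceA_mulVec_eq_zero (hρ : ρ.PosSemidef)
    {v : A × B → ℂ} (hv : ((1 : Matrix A A ℂ) ⊗ₖ ptraceA ρ) *ᵥ v = 0) : ρ *ᵥ v = 0 := by
  refine mulVec_eq_zero_of_submatrix_mulVec_eq_zero hρ fun a => ?_
  have hblock : ptraceA ρ *ᵥ (fun b => v (a, b)) = 0 := by
    ext b
    simpa [mulVec, dotProduct, one_apply, Fintype.sum_prod_type] using congrFun hv (a, b)
  refine mulVec_eq_zero_of_posSemidef_sub (hρ.submatrix _) ?_ hblock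
  rw [ptraceA_eq_sum_submatrix, ← Finset.sum_erase_eq_sub (Finset.mem_univ a)]
  exact posSemidef_sum _ fun a' _ => hρ.submatrix _

variable [DecidableEq B]

lemma cfc_one_kronecker (f : ℝ → ℝ) {σ : Matrix B B ℂ} (hσ : σ.IsHermitian) :
    cfc f ((1 : Matrix A A ℂ) ⊗ₖ σ) = (1 : Matrix A A ℂ) ⊗ₖ cfc f σ := by
  let φ : Matrix B B ℂ →⋆ₐ[ℂ] Matrix (A × B) (A × B) ℂ :=
    { toFun := fun M => (1 : Matrix A A ℂ) ⊗ₖ M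
      map_one' := one_kronecker_one
      map_mul' := fun M N => by rw [← mul_kronecker_mul, Matrix.one_mul]
      map_zero' := kronecker_zero _
      map_add' := kronecker_add _
      commutes' := fun c => by
        simp only [Algebra.algebraMap_eq_smul_one, kronecker_smul, one_kronecker_one]
      map_star' := fun M => by
        simp only [star_eq_conjTranspose, conjTranspose_kronecker, conjTranspose_one] }
  have hφ : Continuous φ := φ.toLinearMap.continuous_of_finiteDimensional
  exact (φ.map_cfc f σ (Matrix.finite_real_spectrum.continuousOn f) hφ hσ.isSelfAdjoint
    (hσ.isSelfAdjoint.map φ)).symm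

lemma relEntropy_one_kronecker_ptraceA (hρ : IsDensity ρ) :
    relEntropy ρ ((1 : Matrix A A ℂ) ⊗ₖ ptraceA ρ) = vnEntropy (ptraceA ρ) - vnEntropy ρ := by
  have hB := (isDensity_ptraceA hρ).1.1
  rw [relEntropy_eq_neg_vnEntropy_sub hρ.1.1, cfc_one_kronecker _ hB, trace_mul_one_kronecker,
    vnEntropy_eq_neg_re_trace hB]
  ring

variable {ι : Type} [Fintype ι] {p : ι → ℝ} {ω : ι → Matrix (A × B) (A × B) ℂ}

theorem vnEntropy_ptraceA_sub_sum_smul_le (hp : IsProbDist p) (hω : ∀ k, IsDensity (ω k)) :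
    vnEntropy (ptraceA (∑ k, (p k : ℂ) • ω k)) - vnEntropy (∑ k, (p k : ℂ) • ω k)
      ≤ ∑ k, p k * (vnEntropy (ptraceA (ω k)) - vnEntropy (ω k)) := by
  have hmix : (1 : Matrix A A ℂ) ⊗ₖ ptraceA (∑ k, (p k : ℂ) • ω k)
      = ∑ k, (p k : ℂ) • ((1 : Matrix A A ℂ) ⊗ₖ ptraceA (ω k)) := by
    simp only [ptraceA_sum_smul, ← kronecker_smul]
    exact map_sum (kroneckerBilinear (R := ℂ) (1 : Matrix A A ℂ)) _ _
  simp only [← relEntropy_one_kronecker_ptraceA (isDensity_sum_smul hp hω),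
    ← relEntropy_one_kronecker_ptraceA (hω _), hmix]
  exact relEntropy_sum_le hp.1 (fun k => (hω k).1)
    (fun k => PosSemidef.one.kronecker (isDensity_ptraceA (hω k)).1)
    fun k v => mulVec_eq_zero_of_one_kronecker_ptraceA_mulVec_eq_zero (hω k).1

theorem mutInfo_sum_smul_le (hp : IsProbDist p) (hω : ∀ k, IsDensity (ω k)) :
    mutInfo (∑ k, (p k : ℂ) • ω k) ≤ ∑ k, p k * mutInfo (ω k) + shannon p := by
  have hcond := vnEntropy_ptraceA_sub_sum_smul_le hp hω
  have hA := vnEntropy_sum_smul_le hp.1 fun k => isDensity_ptraceB (hω k)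
  rw [← ptraceB_sum_smul] at hA
  simp only [mutInfo, add_sub_assoc, mul_add, Finset.sum_add_distrib]
  linarith

end PartialTrace

section TensorPower

section Algebra

variable {ι l m n R : Type*} [Fintype ι] [CommSemiring R]

/-- The `ι`-th tensor power `M^{⊗ι}` of a matrix, with rows and columns indexed by functions
on `ι`. Unlike `tpow` it makes no reference to a bipartition of the index type. -/
def tensorPower (ι : Type*) [Fintype ι] (M : Matrix m n R) : Matrix (ι → m) (ι → n) R :=
  Matrix.of fun x y => ∏ i, M (x i) (y i)

lemma tensorPower_mul [Fintype m] [DecidableEq ι] (M : Matrix l m R) (N : Matrix m n R) :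
    tensorPower ι (M * N) = tensorPower ι M * tensorPower ι N := by
  ext x y
  simp only [tensorPower, Matrix.mul_apply, of_apply, ← Finset.prod_mul_distrib, Fintype.prod_sum]

lemma conjTranspose_tensorPower [StarRing R] (M : Matrix m n R) :
    (tensorPower ι M)ᴴ = tensorPower ι Mᴴ := by
  ext x y
  simp only [tensorPower, conjTranspose_apply, of_apply, star_prod]

lemma tensorPower_diagonal [DecidableEq m] (d : m → R) :
    tensorPower ι (diagonal d) = diagonal fun x => ∏ i, d (x i) := by
  ext x y
  rcases eq_or_ne x y with rfl | h
  · simp only [tensorPower, of_apply, diagonal_apply_eq]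
  · obtain ⟨i, hi⟩ := Function.ne_iff.1 h
    rw [diagonal_apply_ne _ h]
    exact Finset.prod_eq_zero (Finset.mem_univ i) (diagonal_apply_ne _ hi)

lemma tensorPower_one [DecidableEq m] : tensorPower ι (1 : Matrix m m R) = 1 := by
  rw [← diagonal_one, tensorPower_diagonal]
  simp only [Finset.prod_const_one, diagonal_one]

lemma trace_tensorPower [Fintype m] [DecidableEq ι] (M : Matrix m m R) :
    trace (tensorPower ι M) = trace M ^ Fintype.card ι := by
  simp only [trace, diag_apply, tensorPower, of_apply, ← Finset.card_univ, ← Finset.prod_const,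
    Fintype.prod_sum]

end Algebra

section Entropy

variable {m n : Type} [Fintype m] [Fintype n]

section Spectrum

variable [DecidableEq n]

lemma vnEntropy_eq_shannon_of_charpoly_eq {ρ : Matrix n n ℂ} (hρ : ρ.IsHermitian) {e : m → ℝ}
    (hchar : ρ.charpoly = ∏ i, (Polynomial.X - Polynomial.C (e i : ℂ))) :
    vnEntropy ρ = shannon e := by
  have hroots : Finset.univ.val.map (fun i => (hρ.eigenvalues i : ℂ))
      = Finset.univ.val.map (fun i => (e i : ℂ)) := by
    rw [← Polynomial.roots_multiset_prod_X_sub_C (Finset.univ.val.map fun i => (e i : ℂ)),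
      Multiset.map_map]
    exact hρ.roots_charpoly_eq_eigenvalues.symm.trans (congrArg Polynomial.roots hchar)
  have hsum := congrArg (fun s => (s.map fun z : ℂ => z.re * Real.logb 2 z.re).sum) hroots
  simp only [Multiset.map_map] at hsum
  rw [vnEntropy, dif_pos hρ]
  exact congrArg Neg.neg hsum

lemma vnEntropy_submatrix [DecidableEq m] (e : m ≃ n) {ρ : Matrix n n ℂ} (hρ : ρ.IsHermitian) :
    vnEntropy (ρ.submatrix e e) = vnEntropy ρ := by
  rw [vnEntropy_eq_shannon_of_charpoly_eq (hρ.submatrix e) (e := hρ.eigenvalues), vnEntropy,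
    dif_pos hρ, shannon]
  exact (charpoly_reindex e.symm ρ).trans hρ.charpoly_eq

lemma shannon_pi {ι : Type} [Fintype ι] [DecidableEq ι] {d : ι → m → ℝ}
    (hd : ∀ i, ∑ a, d i a = 1) :
    shannon (fun x : ι → m => ∏ i, d i (x i)) = ∑ i, shannon (d i) := by
  have hfactor (k : ι) (x : ι → m) : (∏ i, d i (x i)) * Real.logb 2 (d k (x k))
      = ∏ i, d i (x i) * if i = k then Real.logb 2 (d i (x i)) else 1 := by
    rw [Finset.prod_mul_distrib, Finset.prod_ite_eq', if_pos (Finset.mem_univ k)]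
  have hlog (x : ι → m) : (∏ i, d i (x i)) * Real.logb 2 (∏ i, d i (x i))
      = ∑ k, (∏ i, d i (x i)) * Real.logb 2 (d k (x k)) := by
    rw [← Finset.mul_sum]
    by_cases hzero : ∏ i, d i (x i) = 0
    · rw [hzero, zero_mul, zero_mul]
    · rw [Real.logb_prod _ _ fun i hi => Finset.prod_ne_zero_iff.1 hzero i hi]
  have hmarginal (k : ι) : ∑ x : ι → m, (∏ i, d i (x i)) * Real.logb 2 (d k (x k))
      = ∑ a, d k a * Real.logb 2 (d k a) := by
    simp only [hfactor]
    rw [← Fintype.prod_sum fun i a => d i a * if i = k then Real.logb 2 (d i a) else 1,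
      Fintype.prod_eq_single k fun i hi => by simp only [if_neg hi, mul_one, hd]]
    simp only [if_true]
  simp only [shannon, hlog, Finset.sum_neg_distrib]
  rw [Finset.sum_comm]
  simp only [hmarginal]

variable {ι : Type} [Fintype ι] [DecidableEq ι] {ρ : Matrix n n ℂ}

lemma tensorPower_eq_mul_diagonal_mul (hρ : ρ.IsHermitian) :
    tensorPower ι ρ = tensorPower ι (hρ.eigenvectorUnitary : Matrix n n ℂ) *
      diagonal (fun x : ι → n => ((∏ i, hρ.eigenvalues (x i) : ℝ) : ℂ)) *
      (tensorPower ι (hρ.eigenvectorUnitary : Matrix n n ℂ))ᴴ := by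
  simp only [Complex.ofReal_prod]
  rw [← tensorPower_diagonal fun j => (hρ.eigenvalues j : ℂ), ← tensorPower_mul,
    ← mul_eigenvectorUnitary, conjTranspose_tensorPower, ← tensorPower_mul, Matrix.mul_assoc,
    eigenvectorUnitary_mul_conjTranspose_self, Matrix.mul_one]

lemma charpoly_tensorPower (hρ : ρ.IsHermitian) : (tensorPower ι ρ).charpoly =
    ∏ x : ι → n, (Polynomial.X - Polynomial.C ((∏ i, hρ.eigenvalues (x i) : ℝ) : ℂ)) := by
  rw [tensorPower_eq_mul_diagonal_mul hρ, charpoly_mul_comm, ← Matrix.mul_assoc,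
    conjTranspose_tensorPower, ← tensorPower_mul, conjTranspose_eigenvectorUnitary_mul_self,
    tensorPower_one, Matrix.one_mul, charpoly_diagonal]

end Spectrum

variable {ι : Type} [Fintype ι] [DecidableEq ι] {ρ : Matrix n n ℂ}

lemma isDensity_tensorPower (hρ : IsDensity ρ) : IsDensity (tensorPower ι ρ) := by
  classical
  refine ⟨?_, by rw [trace_tensorPower, hρ.2, one_pow]⟩
  rw [tensorPower_eq_mul_diagonal_mul hρ.1.1]
  refine (posSemidef_diagonal_iff.2 fun x => ?_).mul_mul_conjTranspose_same _
  exact_mod_cast Finset.prod_nonneg fun i _ => hρ.1.eigenvalues_nonneg (x i)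

lemma vnEntropy_tensorPower [DecidableEq n] (hρ : IsDensity ρ) :
    vnEntropy (tensorPower ι ρ) = Fintype.card ι * vnEntropy ρ := by
  rw [vnEntropy_eq_shannon_of_charpoly_eq (isDensity_tensorPower hρ).1.1
      (charpoly_tensorPower hρ.1.1), shannon_pi fun _ => sum_eigenvalues_eq_one hρ,
    Finset.sum_const, nsmul_eq_mul, Finset.card_univ, vnEntropy, dif_pos hρ.1.1, shannon]

end Entropy

end TensorPower

section Broadcast

variable {A B : Type} {n : ℕ}

lemma tpow_eq_submatrix_tensorPower (σ : Matrix (A × B) (A × B) ℂ) (n : ℕ) :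
    tpow σ n = (tensorPower (Fin n) σ).submatrix
      (Equiv.arrowProdEquivProdArrow (Fin n) (fun _ => A) (fun _ => B)).symm
      (Equiv.arrowProdEquivProdArrow (Fin n) (fun _ => A) (fun _ => B)).symm :=
  rfl

lemma ptraceA_tpow [Fintype A] (σ : Matrix (A × B) (A × B) ℂ) (n : ℕ) :
    ptraceA (tpow σ n) = tensorPower (Fin n) (ptraceA σ) := by
  ext x y
  simp only [ptraceA, tpow, tensorPower, of_apply, Fintype.prod_sum]

lemma ptraceB_tpow [Fintype B] (σ : Matrix (A × B) (A × B) ℂ) (n : ℕ) :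
    ptraceB (tpow σ n) = tensorPower (Fin n) (ptraceB σ) := by
  ext x y
  simp only [ptraceB, tpow, tensorPower, of_apply, Fintype.prod_sum]

lemma sum_sum_prod_eq_prod_sum_sum {ι α β R : Type*} [Fintype ι] [DecidableEq ι] [Fintype α]
    [Fintype β] [CommSemiring R] (F : ι → α → β → R) :
    ∑ f : ι → α, ∑ g : ι → β, ∏ i, F i (f i) (g i) = ∏ i, ∑ a, ∑ b, F i a b := by
  simp only [Fintype.prod_sum]

variable [Fintype A] [Fintype B]

lemma isDensity_tpow {σ : Matrix (A × B) (A × B) ℂ} (hσ : IsDensity σ) (n : ℕ) :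
    IsDensity (tpow σ n) := by
  rw [tpow_eq_submatrix_tensorPower]
  refine ⟨(isDensity_tensorPower hσ).1.submatrix _, ?_⟩
  rw [← (isDensity_tensorPower (ι := Fin n) hσ).2]
  exact Equiv.sum_comp _ fun x => tensorPower (Fin n) σ x x

variable [DecidableEq A] [DecidableEq B]

lemma mutInfo_tpow {σ : Matrix (A × B) (A × B) ℂ} (hσ : IsDensity σ) (n : ℕ) :
    mutInfo (tpow σ n) = n * mutInfo σ := by
  rw [mutInfo, ptraceA_tpow, ptraceB_tpow, tpow_eq_submatrix_tensorPower,
    vnEntropy_submatrix _ (isDensity_tensorPower hσ).1.1, vnEntropy_tensorPower hσ,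
    vnEntropy_tensorPower (isDensity_ptraceA hσ), vnEntropy_tensorPower (isDensity_ptraceB hσ),
    Fintype.card_fin, mutInfo]
  ring

lemma copyMarginal_tpow {σ : Matrix (A × B) (A × B) ℂ} (hσ : σ.trace = 1) (k : Fin n) :
    copyMarginal (tpow σ n) k = σ := by
  ext x y
  let F (i : Fin n) (a : A) (b : B) : ℂ :=
    if i = k then if a = x.1 ∧ b = x.2 then σ x y else 0 else σ (a, b) (a, b)
  have hfactor (f : Fin n → A) (g : Fin n → B) : (if f k = x.1 ∧ g k = x.2 then
      tpow σ n (f, g) (Function.update f k y.1, Function.update g k y.2) else 0)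
      = ∏ i, F i (f i) (g i) := by
    simp only [tpow, of_apply]
    split_ifs with hx
    · refine Finset.prod_congr rfl fun i _ => ?_
      rcases eq_or_ne i k with rfl | hi
      · simp only [F, hx, and_self, if_true, Function.update_self]
      · simp only [F, if_neg hi, Function.update_of_ne hi]
    · refine (Finset.prod_eq_zero (Finset.mem_univ k) ?_).symm
      simp only [F, if_true, if_neg hx]
  have htrace : ∑ a, ∑ b, σ (a, b) (a, b) = 1 := by
    rw [← hσ, trace, Fintype.sum_prod_type]
    rfl
  simp only [copyMarginal, of_apply, hfactor]
  rw [sum_sum_prod_eq_prod_sum_sum, Fintype.prod_eq_single k fun i hi => by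
    simp only [F, if_neg hi, htrace]]
  simp only [F, if_true, ite_and, Finset.sum_ite_irrel, Finset.sum_const_zero, Finset.sum_ite_eq',
    Finset.mem_univ]

variable {ι : Type*} [Fintype ι]

lemma copyMarginal_sum_smul (p : ι → ℝ)
    (τ : ι → Matrix ((Fin n → A) × (Fin n → B)) ((Fin n → A) × (Fin n → B)) ℂ) (k : Fin n) :
    copyMarginal (∑ j, (p j : ℂ) • τ j) k = ∑ j, (p j : ℂ) • copyMarginal (τ j) k := by
  ext x y
  simp only [copyMarginal, of_apply, Matrix.sum_apply, Matrix.smul_apply, smul_eq_mul,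
    Finset.mul_sum]
  symm
  rw [Finset.sum_comm]
  refine Finset.sum_congr rfl fun f _ => ?_
  rw [Finset.sum_comm]
  refine Finset.sum_congr rfl fun g _ => ?_
  simp only [mul_ite, mul_zero, Finset.sum_ite_irrel, Finset.sum_const_zero]

lemma isBroadcast_sum_smul_tpow {ι : Type} [Fintype ι] {p : ι → ℝ}
    {σ : ι → Matrix (A × B) (A × B) ℂ} (hp : IsProbDist p) (hσ : ∀ k, IsDensity (σ k)) (n : ℕ) :
    IsBroadcast n (∑ k, (p k : ℂ) • tpow (σ k) n) (∑ k, (p k : ℂ) • σ k) := by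
  refine ⟨isDensity_sum_smul hp fun k => isDensity_tpow (hσ k) n, fun i => ?_⟩
  simp only [copyMarginal_sum_smul, copyMarginal_tpow (hσ _).2]

lemma neg_card_div_log_two_le_mutInfo {τ : Matrix (A × B) (A × B) ℂ} (hτ : IsDensity τ) :
    -(Fintype.card (A × B) / Real.log 2) ≤ mutInfo τ := by
  have hA := vnEntropy_nonneg (isDensity_ptraceA hτ)
  have hB := vnEntropy_nonneg (isDensity_ptraceB hτ)
  have hAB := vnEntropy_le_card_div_log_two hτ.1
  rw [mutInfo]
  linarith

lemma Ib_le_mutInfo {ρ : Matrix (A × B) (A × B) ℂ}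
    {τ : Matrix ((Fin n → A) × (Fin n → B)) ((Fin n → A) × (Fin n → B)) ℂ}
    (hτ : IsBroadcast n τ ρ) : Ib n ρ ≤ mutInfo τ := by
  refine csInf_le ⟨-(Fintype.card ((Fin n → A) × (Fin n → B)) / Real.log 2), ?_⟩ ⟨τ, hτ, rfl⟩
  rintro x ⟨τ', hτ', rfl⟩
  exact neg_card_div_log_two_le_mutInfo hτ'.1

theorem Ib_sum_smul_le {ι : Type} [Fintype ι] {p : ι → ℝ} {σ : ι → Matrix (A × B) (A × B) ℂ}
    (hp : IsProbDist p) (hσ : ∀ k, IsDensity (σ k)) (n : ℕ) :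
    Ib n (∑ k, (p k : ℂ) • σ k) ≤ n * (∑ k, p k * mutInfo (σ k)) + shannon p :=
  calc Ib n (∑ k, (p k : ℂ) • σ k)
      ≤ mutInfo (∑ k, (p k : ℂ) • tpow (σ k) n) :=
        Ib_le_mutInfo (isBroadcast_sum_smul_tpow hp hσ n)
    _ ≤ ∑ k, p k * mutInfo (tpow (σ k) n) + shannon p :=
        mutInfo_sum_smul_le hp fun k => isDensity_tpow (hσ k) n
    _ = n * (∑ k, p k * mutInfo (σ k)) + shannon p := by
        simp only [mutInfo_tpow (hσ _), Finset.mul_sum, mul_left_comm]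

lemma le_of_tendsto_div_of_le_mul_add {u : ℕ → ℝ} {x c L : ℝ} (hu : ∀ n, u n ≤ n * x + c)
    (hL : Tendsto (fun n : ℕ => u n / n) atTop (𝓝 L)) : L ≤ x := by
  have hlim : Tendsto (fun n : ℕ => x + c / n) atTop (𝓝 x) := by
    simpa only [add_zero] using (tendsto_const_div_atTop_nhds_zero_nat c).const_add x
  refine le_of_tendsto_of_tendsto hL hlim ?_
  filter_upwards [eventually_gt_atTop 0] with n hn
  have hn : (0 : ℝ) < n := by exact_mod_cast hn
  rw [div_le_iff₀ hn, add_mul, div_mul_cancel₀ _ hn.ne', mul_comm x]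
  exact hu n

lemma le_two_mul_EsqC {ρ : Matrix (A × B) (A × B) ℂ} (hρ : IsDensity ρ) {L : ℝ}
    (hL : ∀ (m : ℕ) (p : Fin m → ℝ) (σ : Fin m → Matrix (A × B) (A × B) ℂ), IsProbDist p →
      (∀ k, IsDensity (σ k)) → ∑ k, (p k : ℂ) • σ k = ρ → L ≤ ∑ k, p k * mutInfo (σ k)) :
    L ≤ 2 * EsqC ρ := by
  rw [EsqC, ← mul_assoc, mul_one_div_cancel two_ne_zero, one_mul]
  refine le_csInf ⟨_, 1, fun _ => 1, fun _ => ρ, fun _ => zero_le_one, by simp, fun _ => hρ,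
    by simp, rfl⟩ ?_
  rintro x ⟨m, p, σ, hp_nonneg, hp_sum, hσ, hsum, rfl⟩
  exact hL m p σ ⟨hp_nonneg, hp_sum⟩ hσ hsum

end Broadcast

/-- for any mixed ensemble of ρ, (I_b)_n(ρ) ≤ n·∑_k p_k I(ρ^k) + S({p_k});
hence I_b^{(∞)}(ρ) ≤ 2E^C_sq(ρ). -/
theorem stmt_16 {A B : Type} [Fintype A] [Fintype B] [DecidableEq A] [DecidableEq B]
    (ρ : Matrix (A × B) (A × B) ℂ) (hρ : IsDensity ρ) :
    (∀ (m : ℕ) (p : Fin m → ℝ) (σ : Fin m → Matrix (A × B) (A × B) ℂ),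
        (∀ k, 0 ≤ p k) → (∑ k, p k = 1) → (∀ k, IsDensity (σ k)) →
        (∑ k, (p k : ℂ) • σ k = ρ) →
        ∀ n : ℕ, 1 ≤ n →
          Ib n ρ ≤ n * (∑ k, p k * mutInfo (σ k)) + shannon p) ∧
    (∀ L : ℝ, Tendsto (fun n : ℕ => Ib n ρ / n) atTop (nhds L) → L ≤ 2 * EsqC ρ) := by
  refine ⟨fun m p σ hp_nonneg hp_sum hσ hρ_eq n _ => ?_, fun L hL => ?_⟩
  · rw [← hρ_eq]
    exact Ib_sum_smul_le ⟨hp_nonneg, hp_sum⟩ hσ n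
  · refine le_two_mul_EsqC hρ fun m p σ hp hσ hρ_eq =>
      le_of_tendsto_div_of_le_mul_add (c := shannon p) ?_ hL
    rw [← hρ_eq]
    exact Ib_sum_smul_le hp hσ

end
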